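/- Let p be a prime, n ≥ 1, and f ∈ 𝔽_p[x₁,…,xₙ] a polynomial of total degree at most n. Suppose λ is a weighting such that f has a unique term of maximal λ-weight, and that term is c·x₁x₂⋯xₙ with c ≠ 0 (so that g ↦ Tr(f^{p−1}·g) is a Frobenius splitting). If I is an ideal of 𝔽_p[x₁,…,xₙ] compatibly split by g ↦ Tr(f^{p−1}·g), then the initial ideal init_λ(I) is a squarefree monomial (Stanley–Reisner) ideal; in particular init_λ(I) and I are radical. -/

import Mathlib

open MvPolynomial

/-- The near-splitting `Tr` on `𝔽_p[x₁,…,xₙ]`: on a monomial `∏ xᵢ^{eᵢ}` it gives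
`∏ xᵢ^{(eᵢ+1)/p - 1}` if `p ∣ eᵢ + 1` for all `i`, and `0` otherwise, extended
`𝔽_p`-linearly (note that `c^{1/p} = c` for `c ∈ 𝔽_p`). -/
noncomputable def Tr (p n : ℕ) (g : MvPolynomial (Fin n) (ZMod p)) :
    MvPolynomial (Fin n) (ZMod p) :=
  ∑ m ∈ g.support,
    if ∀ i, p ∣ (m i + 1) then
      monomial (Finsupp.equivFunOnFinite.symm fun i => (m i + 1) / p - 1) (g.coeff m)
    else 0

/-- A Frobenius splitting is an additive map `φ` with `φ (a^p * b) = a * φ b` and `φ 1 = 1`. -/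
def IsFrobeniusSplitting (p : ℕ) {R : Type*} [CommRing R] (φ : R → R) : Prop :=
  (∀ a b : R, φ (a + b) = φ a + φ b) ∧ (∀ a b : R, φ (a ^ p * b) = a * φ b) ∧ φ 1 = 1

/-- The `λ`-weight of an exponent vector `m` is `∑ᵢ λᵢ·mᵢ`. -/
def wtOf {n : ℕ} (lam : Fin n → ℕ) (m : Fin n →₀ ℕ) : ℕ := ∑ i, lam i * m i

/-- The leading form `init_λ(g)`: the sum of the terms of `g` of maximal `λ`-weight. -/
noncomputable def initForm {R : Type*} [CommRing R] {n : ℕ} (lam : Fin n → ℕ)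
    (g : MvPolynomial (Fin n) R) : MvPolynomial (Fin n) R :=
  ∑ m ∈ g.support.filter (fun m => ∀ m' ∈ g.support, wtOf lam m' ≤ wtOf lam m),
    MvPolynomial.monomial m (g.coeff m)

/-- The initial ideal `init_λ(I)`, spanned by the leading forms of the nonzero
elements of `I`. -/
noncomputable def initIdeal {R : Type*} [CommRing R] {n : ℕ} (lam : Fin n → ℕ)
    (I : Ideal (MvPolynomial (Fin n) R)) : Ideal (MvPolynomial (Fin n) R) :=
  Ideal.span {h | ∃ g ∈ I, g ≠ 0 ∧ initForm lam g = h}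

/-- A squarefree monomial (Stanley–Reisner) ideal: one generated by a set of squarefree
monomials `∏_{i ∈ s} xᵢ`. -/
def IsSqfreeMonomialIdeal {R : Type*} [CommRing R] {n : ℕ}
    (I : Ideal (MvPolynomial (Fin n) R)) : Prop :=
  ∃ S : Set (Finset (Fin n)),
    I = Ideal.span ((fun s : Finset (Fin n) => ∏ i ∈ s, (X i : MvPolynomial (Fin n) R)) '' S)

/-- The all-ones exponent vector. -/
noncomputable def oneV (n : ℕ) : Fin n →₀ ℕ := Finsupp.equivFunOnFinite.symm fun _ : Fin n => 1

lemma oneV_apply (n : ℕ) (i : Fin n) : oneV n i = 1 := rfl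

lemma wtOf_add {n : ℕ} (lam : Fin n → ℕ) (a b : Fin n →₀ ℕ) :
    wtOf lam (a + b) = wtOf lam a + wtOf lam b := by
  simp [wtOf, mul_add, Finset.sum_add_distrib]

lemma wtOf_smul {n : ℕ} (lam : Fin n → ℕ) (q : ℕ) (a : Fin n →₀ ℕ) :
    wtOf lam (q • a) = q * wtOf lam a := by
  simp [wtOf, Finset.mul_sum, mul_left_comm]

lemma wtOf_weight {n : ℕ} (lam : Fin n → ℕ) (a : Fin n →₀ ℕ) :
    Finsupp.weight lam a = wtOf lam a := by
  simp [wtOf, Finsupp.weight_apply, Finsupp.sum_fintype, mul_comm]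

lemma coeff_Tr {p n : ℕ} (hp : p.Prime) (g : MvPolynomial (Fin n) (ZMod p)) (k : Fin n →₀ ℕ) :
    coeff k (Tr p n g) = coeff (p • k + (p - 1) • oneV n) g := by
  classical
  have hp1 := hp.two_le
  unfold Tr
  rw [coeff_sum]
  have : ∀ m ∈ g.support, coeff k (if ∀ i, p ∣ (m i + 1) then
      monomial (Finsupp.equivFunOnFinite.symm fun i => (m i + 1) / p - 1) (g.coeff m)
    else 0) = if p • k + (p - 1) • oneV n = m then coeff m g else 0 := by
    intro m _
    by_cases h : p • k + (p - 1) • oneV n = m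
    · have hm : ∀ i, m i + 1 = p * (k i + 1) := by
        intro i
        rw [← h]
        simp only [Finsupp.add_apply, Finsupp.smul_apply, oneV_apply, smul_eq_mul]
        rw [mul_add]; omega
      rw [if_pos h, if_pos (fun i => ⟨_, hm i⟩), coeff_monomial, if_pos]
      ext i
      simp [hm i, Nat.mul_div_cancel_left _ hp.pos]
    · rw [if_neg h]
      split_ifs with hd
      · rw [coeff_monomial, if_neg]
        rintro rfl
        apply h
        ext i
        obtain ⟨t, ht⟩ := hd i
        have ht0 : t ≠ 0 := by rintro rfl; omega
        obtain ⟨s, rfl⟩ := Nat.exists_eq_succ_of_ne_zero ht0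
        simp only [Finsupp.add_apply, Finsupp.smul_apply, oneV_apply, smul_eq_mul,
          Finsupp.equivFunOnFinite_symm_apply_apply, ht, Nat.mul_div_cancel_left _ hp.pos]
        simp only [Nat.succ_eq_add_one, mul_add, Nat.add_sub_cancel] at ht ⊢
        omega
      · simp
  rw [Finset.sum_congr rfl this, Finset.sum_ite_eq]
  split_ifs with h
  · rfl
  · exact (notMem_support_iff.mp h).symm

lemma coeff_pow_f {p n : ℕ} (lam : Fin n → ℕ)
    (f : MvPolynomial (Fin n) (ZMod p))
    (huniq : ∀ m ∈ f.support, m ≠ oneV n → wtOf lam m < wtOf lam (oneV n)) (j : ℕ) :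
    (∀ m, coeff m (f ^ j) ≠ 0 → m ≠ j • oneV n → wtOf lam m < j * wtOf lam (oneV n)) ∧
      coeff (j • oneV n) (f ^ j) = coeff (oneV n) f ^ j := by
  classical
  induction j with
  | zero =>
    constructor
    · intro m hm hne
      simp [coeff_one] at hm hne
      exact absurd hm.1.symm hne
    · simp
  | succ j ih =>
    obtain ⟨ih1, ih2⟩ := ih
    have key : ∀ a b : Fin n →₀ ℕ, coeff a (f ^ j) * coeff b f ≠ 0 →
        (a = j • oneV n ∧ b = oneV n) ∨ wtOf lam (a + b) < (j + 1) * wtOf lam (oneV n) := by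
      intro a b hab
      have ha := ih1 a (left_ne_zero_of_mul hab)
      have hb := huniq b (mem_support_iff.mpr (right_ne_zero_of_mul hab))
      rw [wtOf_add, add_mul, one_mul]
      by_cases h1 : a = j • oneV n
      · by_cases h2 : b = oneV n
        · exact Or.inl ⟨h1, h2⟩
        · right
          have := hb h2
          rw [h1, wtOf_smul]; omega
      · right
        have h3 := ha h1
        by_cases h2 : b = oneV n
        · rw [h2]; omega
        · have := hb h2; omega
    constructor
    · intro m hm hne
      rw [pow_succ, coeff_mul] at hm
      obtain ⟨⟨a, b⟩, hab, hx⟩ := Finset.exists_ne_zero_of_sum_ne_zero hm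
      rw [Finset.HasAntidiagonal.mem_antidiagonal] at hab
      simp only at hab hx
      rcases key a b hx with ⟨rfl, rfl⟩ | h
      · exact absurd (by rw [← hab, add_smul, one_smul]) hne
      · rwa [hab] at h
    · rw [pow_succ, coeff_mul, pow_succ, ← ih2]
      rw [Finset.sum_eq_single (j • oneV n, oneV n)]
      · rintro ⟨a, b⟩ hab hne
        rw [Finset.HasAntidiagonal.mem_antidiagonal] at hab
        simp only at hab ⊢
        by_contra hx
        rcases key a b hx with ⟨rfl, rfl⟩ | h
        · exact hne rfl
        · rw [hab, wtOf_smul] at h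
          exact lt_irrefl _ h
      · intro h
        exact absurd (Finset.HasAntidiagonal.mem_antidiagonal.mpr (by simp [add_smul])) h

lemma coeff_split {p n : ℕ} (hp : p.Prime) (lam : Fin n → ℕ)
    (f : MvPolynomial (Fin n) (ZMod p)) (hmem : oneV n ∈ f.support)
    (huniq : ∀ m ∈ f.support, m ≠ oneV n → wtOf lam m < wtOf lam (oneV n))
    (g : MvPolynomial (Fin n) (ZMod p)) (w : ℕ) (hw : ∀ m, w < wtOf lam m → coeff m g = 0)
    (k : Fin n →₀ ℕ) (hk : w ≤ p * wtOf lam k) :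
    coeff k (Tr p n (f ^ (p - 1) * g)) = coeff (p • k) g := by
  classical
  haveI := Fact.mk hp
  obtain ⟨h1, h2⟩ := coeff_pow_f lam f huniq (p - 1)
  rw [coeff_Tr hp, coeff_mul, Finset.sum_eq_single ((p - 1) • oneV n, p • k)]
  · simp only
    rw [h2, ZMod.pow_card_sub_one_eq_one (mem_support_iff.mp hmem), one_mul]
  · rintro ⟨a, b⟩ hab hne
    rw [Finset.HasAntidiagonal.mem_antidiagonal] at hab
    simp only at hab ⊢
    by_contra hx
    have hb : wtOf lam b ≤ w := by
      by_contra hb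
      exact right_ne_zero_of_mul hx (hw b (not_le.mp hb))
    have hs := congrArg (wtOf lam) hab
    rw [wtOf_add, wtOf_add, wtOf_smul, wtOf_smul] at hs
    by_cases ha : a = (p - 1) • oneV n
    · subst ha
      apply hne
      rw [add_comm (p • k)] at hab
      rw [add_left_cancel hab]
    · have := h1 a (left_ne_zero_of_mul hx) ha
      omega
  · intro h
    exact absurd (Finset.HasAntidiagonal.mem_antidiagonal.mpr (add_comm _ _)) h

lemma Tr_pow_mul {p n : ℕ} (hp : p.Prime) (g G : MvPolynomial (Fin n) (ZMod p)) :
    Tr p n (G * g ^ p) = Tr p n G * g := by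
  classical
  haveI := Fact.mk hp
  induction g using MvPolynomial.induction_on' with
  | monomial m c =>
    ext k
    rw [monomial_pow, ZMod.pow_card, coeff_Tr hp, coeff_mul_monomial', coeff_mul_monomial',
      coeff_Tr hp]
    have hiff : p • m ≤ p • k + (p - 1) • oneV n ↔ m ≤ k := by
      constructor
      · intro h i
        have := h i
        simp only [Finsupp.add_apply, Finsupp.smul_apply, oneV_apply, smul_eq_mul] at this
        by_contra hlt
        have h3 : p * (k i + 1) ≤ p * m i := Nat.mul_le_mul_left _ (by omega)
        have := hp.pos
        rw [mul_add] at h3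
        omega
      · intro h
        exact (nsmul_le_nsmul_right h p).trans (le_add_of_nonneg_right (zero_le))
    by_cases h : m ≤ k
    · rw [if_pos h, if_pos (hiff.mpr h)]
      congr 2
      ext i
      have := Nat.mul_le_mul_left p (h i)
      simp only [Finsupp.add_apply, Finsupp.smul_apply, oneV_apply, smul_eq_mul,
        Finsupp.tsub_apply, Nat.mul_sub]
      omega
    · rw [if_neg h, if_neg (mt hiff.mp h)]
  | add a b ha hb =>
    have hadd : ∀ u v : MvPolynomial (Fin n) (ZMod p), Tr p n (u + v) = Tr p n u + Tr p n v := by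
      intro u v
      ext k
      simp [coeff_Tr hp]
    rw [add_pow_char, mul_add, hadd, ha, hb, mul_add]

lemma isRadical_of_pow_p {R : Type*} [CommRing R] {p : ℕ} (hp : p.Prime) (I : Ideal R)
    (h : ∀ g, g ^ p ∈ I → g ∈ I) : I.IsRadical := by
  rintro g ⟨k, hk⟩
  have h2 : ∀ e : ℕ, g ^ (p ^ e) ∈ I → g ∈ I := by
    intro e
    induction e with
    | zero => simp
    | succ e ih =>
      intro he
      rw [pow_succ, pow_mul] at he
      exact ih (h _ he)
  exact h2 k (I.pow_mem_of_pow_mem hk (Nat.lt_pow_self hp.one_lt).le)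

/-- `e` is the weight-`w` part of `g`, where `g` has no terms of weight above `w`. -/
def IsTopPart {p n : ℕ} (lam : Fin n → ℕ) (w : ℕ) (g e : MvPolynomial (Fin n) (ZMod p)) : Prop :=
  (∀ m, w < wtOf lam m → coeff m g = 0) ∧
    ∀ m, coeff m e = if wtOf lam m = w then coeff m g else 0

lemma coeff_initForm {p n : ℕ} (lam : Fin n → ℕ) (g : MvPolynomial (Fin n) (ZMod p))
    (k : Fin n →₀ ℕ) : coeff k (initForm lam g) =
      if ∀ m' ∈ g.support, wtOf lam m' ≤ wtOf lam k then coeff k g else 0 := by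
  classical
  unfold initForm
  simp only [coeff_sum, coeff_monomial]
  rw [Finset.sum_ite_eq']
  by_cases hk : k ∈ g.support
  · simp only [Finset.mem_filter, hk, true_and]
  · simp [notMem_support_iff.mp hk]

lemma isTopPart_initForm {p n : ℕ} (lam : Fin n → ℕ) (g : MvPolynomial (Fin n) (ZMod p))
    (hg : g ≠ 0) : ∃ w, IsTopPart lam w g (initForm lam g) := by
  obtain ⟨a, ha, hmax⟩ := Finset.exists_max_image g.support (wtOf lam) (support_nonempty.mpr hg)
  refine ⟨wtOf lam a, ?_, ?_⟩
  · intro m hm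
    by_contra h
    exact absurd (hmax m (mem_support_iff.mpr h)) (not_le.mpr hm)
  · intro m
    rw [coeff_initForm]
    by_cases hm : m ∈ g.support
    · congr 1
      apply propext
      constructor
      · intro h
        exact le_antisymm (hmax m hm) (h a ha)
      · intro h
        rw [h]; exact hmax
    · simp [notMem_support_iff.mp hm]

lemma IsTopPart.mem {p n : ℕ} {lam : Fin n → ℕ} {w : ℕ} {g e : MvPolynomial (Fin n) (ZMod p)}
    (h : IsTopPart lam w g e) {I : Ideal (MvPolynomial (Fin n) (ZMod p))} (hg : g ∈ I) :
    e ∈ initIdeal lam I := by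
  by_cases he : e = 0
  · rw [he]; exact Ideal.zero_mem _
  obtain ⟨a, ha⟩ := ne_zero_iff.mp he
  have ha2 := h.2 a
  have hwa : wtOf lam a = w := by
    by_contra hc
    rw [if_neg hc] at ha2
    exact ha ha2
  rw [if_pos hwa] at ha2
  rw [ha2] at ha
  have hle : ∀ m ∈ g.support, wtOf lam m ≤ w := by
    intro m hm
    by_contra hc
    exact mem_support_iff.mp hm (h.1 m (not_le.mp hc))
  refine Ideal.subset_span ⟨g, hg, ne_zero_iff.mpr ⟨a, ha⟩, ?_⟩
  ext k
  rw [coeff_initForm, h.2 k]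
  by_cases hk : k ∈ g.support
  · congr 1
    apply propext
    constructor
    · intro h'
      exact le_antisymm (hle k hk) (hwa ▸ h' a (mem_support_iff.mpr ha))
    · intro h'
      rw [h']; exact hle
  · simp [notMem_support_iff.mp hk]

lemma IsTopPart.monomial_mul {p n : ℕ} {lam : Fin n → ℕ} {w : ℕ}
    {g e : MvPolynomial (Fin n) (ZMod p)} (h : IsTopPart lam w g e) (m : Fin n →₀ ℕ) (c : ZMod p) :
    IsTopPart lam (w + wtOf lam m) (monomial m c * g) (monomial m c * e) := by
  classical
  constructor
  · intro k hk
    rw [coeff_monomial_mul']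
    split_ifs with hmk
    · rw [h.1, mul_zero]
      have := wtOf_add lam (k - m) m
      rw [tsub_add_cancel_of_le hmk] at this
      omega
    · rfl
  · intro k
    rw [coeff_monomial_mul', coeff_monomial_mul']
    by_cases hmk : m ≤ k
    · rw [if_pos hmk, if_pos hmk, h.2]
      have := wtOf_add lam (k - m) m
      rw [tsub_add_cancel_of_le hmk] at this
      by_cases hc : wtOf lam (k - m) = w
      · rw [if_pos hc, if_pos (by omega)]
      · rw [if_neg hc, if_neg (by omega), mul_zero]
    · simp [hmk]

/-- The initial ideal is stable under the standard splitting. -/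
lemma init_split {p n : ℕ} (hp : p.Prime) (lam : Fin n → ℕ)
    (f : MvPolynomial (Fin n) (ZMod p)) (hmem : oneV n ∈ f.support)
    (huniq : ∀ m ∈ f.support, m ≠ oneV n → wtOf lam m < wtOf lam (oneV n))
    (I : Ideal (MvPolynomial (Fin n) (ZMod p)))
    (hI : ∀ g ∈ I, Tr p n (f ^ (p - 1) * g) ∈ I)
    (x : MvPolynomial (Fin n) (ZMod p)) (hx : x ∈ initIdeal lam I) :
    ∃ h ∈ initIdeal lam I, ∀ k, coeff k h = coeff (p • k) x := by
  classical
  have hadd : ∀ x y : MvPolynomial (Fin n) (ZMod p),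
      (∃ h ∈ initIdeal lam I, ∀ k, coeff k h = coeff (p • k) x) →
      (∃ h ∈ initIdeal lam I, ∀ k, coeff k h = coeff (p • k) y) →
      ∃ h ∈ initIdeal lam I, ∀ k, coeff k h = coeff (p • k) (x + y) := by
    rintro x y ⟨a, ha, ha'⟩ ⟨b, hb, hb'⟩
    exact ⟨a + b, Ideal.add_mem _ ha hb, fun k => by simp [ha', hb']⟩
  have htop : ∀ (w : ℕ) (g e : MvPolynomial (Fin n) (ZMod p)), g ∈ I → IsTopPart lam w g e →
      ∃ h ∈ initIdeal lam I, ∀ k, coeff k h = coeff (p • k) e := by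
    intro w g e hg ht
    by_cases hw : p ∣ w
    · obtain ⟨v, rfl⟩ := hw
      have hT : IsTopPart lam v (Tr p n (f ^ (p - 1) * g))
          (weightedHomogeneousComponent lam v (Tr p n (f ^ (p - 1) * g))) := by
        constructor
        · intro m hm
          have hlt : p * v < p * wtOf lam m := Nat.mul_lt_mul_of_pos_left hm hp.pos
          rw [coeff_split hp lam f hmem huniq g (p * v) ht.1 m hlt.le, ht.1]
          rwa [wtOf_smul]
        · intro m
          rw [coeff_weightedHomogeneousComponent, wtOf_weight]
      refine ⟨_, hT.mem (hI g hg), fun k => ?_⟩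
      rw [hT.2, ht.2, wtOf_smul]
      by_cases hk : wtOf lam k = v
      · rw [if_pos hk, if_pos (by rw [hk]),
          coeff_split hp lam f hmem huniq g (p * v) ht.1 k (by rw [hk])]
      · rw [if_neg hk, if_neg]
        intro h
        exact hk (Nat.eq_of_mul_eq_mul_left hp.pos h)
    · refine ⟨0, Ideal.zero_mem _, fun k => ?_⟩
      rw [ht.2, wtOf_smul, if_neg, coeff_zero]
      rintro rfl
      exact hw (dvd_mul_right _ _)
  suffices H : ∀ r : MvPolynomial (Fin n) (ZMod p),
      ∃ h ∈ initIdeal lam I, ∀ k, coeff k h = coeff (p • k) (r * x) by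
    simpa using H 1
  unfold initIdeal at hx
  induction hx using Submodule.span_induction with
  | mem x hx =>
    obtain ⟨g, hg, hg0, rfl⟩ := hx
    obtain ⟨w, hw⟩ := isTopPart_initForm lam g hg0
    intro r
    induction r using MvPolynomial.induction_on' with
    | monomial m c => exact htop _ _ _ (Ideal.mul_mem_left _ _ hg) (hw.monomial_mul m c)
    | add a b ha hb => rw [add_mul]; exact hadd _ _ ha hb
  | zero => intro r; exact ⟨0, Ideal.zero_mem _, by simp⟩
  | add a b _ _ ha hb => intro r; rw [mul_add]; exact hadd _ _ (ha r) (hb r)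
  | smul a x _ hx => intro r; rw [smul_eq_mul, ← mul_assoc]; exact hx _

/-- An ideal stable under the standard splitting is a squarefree monomial ideal. -/
lemma sqfree_of_split {p n : ℕ} (hp : p.Prime)
    (J : Ideal (MvPolynomial (Fin n) (ZMod p)))
    (hJ : ∀ x ∈ J, ∃ h ∈ J, ∀ k, coeff k h = coeff (p • k) x) :
    IsSqfreeMonomialIdeal J := by
  classical
  haveI := Fact.mk hp
  have hq : ∀ e : ℕ, ∀ x ∈ J, ∃ h ∈ J, ∀ k, coeff k h = coeff ((p ^ e) • k) x := by
    intro e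
    induction e with
    | zero => intro x hx; exact ⟨x, hx, by simp⟩
    | succ e ih =>
      intro x hx
      obtain ⟨h, hh, hc⟩ := ih x hx
      obtain ⟨h', hh', hc'⟩ := hJ h hh
      exact ⟨h', hh', fun k => by rw [hc', hc, smul_smul, pow_succ]⟩
  have hprod : ∀ s : Finset (Fin n), ∏ i ∈ s, (X i : MvPolynomial (Fin n) (ZMod p)) =
      monomial (Finsupp.equivFunOnFinite.symm fun i => if i ∈ s then 1 else 0) 1 := by
    intro s
    rw [monomial_eq, Finsupp.prod_fintype _ _ (by simp)]
    simp [Finset.prod_ite_mem, pow_ite]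
  have hsup : ∀ g ∈ J, ∀ m ∈ g.support,
      ∏ i ∈ m.support, (X i : MvPolynomial (Fin n) (ZMod p)) ∈ J := by
    intro g hg m hm
    rw [mem_support_iff] at hm
    -- a bound on exponents
    obtain ⟨e, he⟩ : ∃ e : ℕ, ∀ m' ∈ g.support, ∀ i, m' i < p ^ e := by
      refine ⟨g.totalDegree, fun m' hm' i => ?_⟩
      refine lt_of_le_of_lt ?_ (Nat.lt_pow_self hp.one_lt)
      refine le_trans ?_ (le_totalDegree hm')
      by_cases hi : i ∈ m'.support
      · exact Finset.single_le_sum (f := fun i => m' i) (fun _ _ => Nat.zero_le _) hi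
      · rw [Finsupp.notMem_support_iff.mp hi]; exact Nat.zero_le _
    set q := p ^ e with hqdef
    have hmq := he m (mem_support_iff.mpr hm)
    set u : Fin n →₀ ℕ :=
      Finsupp.equivFunOnFinite.symm fun i => if i ∈ m.support then 1 else 0 with hu
    have hui : ∀ i, u i = if m i = 0 then 0 else 1 := by
      intro i
      simp [hu]
    have hmu : m ≤ q • u := by
      intro i
      have := hmq i
      simp only [Finsupp.smul_apply, smul_eq_mul, hui]
      split_ifs with h <;> omega
    obtain ⟨h, hh, hc⟩ := hq e _ (J.mul_mem_left (monomial (q • u - m) (coeff m g)⁻¹) hg)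
    convert hh using 1
    rw [hprod, ← hu]
    ext k
    rw [hc, coeff_monomial, coeff_monomial_mul']
    by_cases hk : u = k
    · subst hk
      rw [if_pos rfl, if_pos tsub_le_self, tsub_tsub_cancel_of_le hmu, inv_mul_cancel₀ hm]
    · rw [if_neg hk]
      split_ifs with hle
      · symm
        rw [mul_eq_zero]
        right
        by_contra hne
        have hlt := he _ (mem_support_iff.mpr hne)
        apply hk
        ext i
        have h1 := hlt i
        have h2 := hle i
        have h3 := hmq i
        have h4 := hmu i
        simp only [Finsupp.tsub_apply, Finsupp.smul_apply, smul_eq_mul, ← hqdef] at h1 h2 h4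
        have h5 : q * k i + m i < q * (u i + 1) := by rw [mul_add]; omega
        have h6 : k i < u i + 1 := Nat.lt_of_mul_lt_mul_left (lt_of_le_of_lt (Nat.le_add_right _ _) h5)
        have h7 : q * u i < q * (k i + 1) := by rw [mul_add]; omega
        have h8 : u i < k i + 1 := Nat.lt_of_mul_lt_mul_left h7
        omega
      · rfl
  refine ⟨{s | ∏ i ∈ s, (X i : MvPolynomial (Fin n) (ZMod p)) ∈ J}, le_antisymm ?_ ?_⟩
  · intro g hg
    rw [g.as_sum]
    refine Ideal.sum_mem _ fun m hm => ?_
    have h1 : ∏ i ∈ m.support, (X i : MvPolynomial (Fin n) (ZMod p)) ∣ monomial m (coeff m g) := by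
      rw [monomial_eq]
      refine Dvd.dvd.mul_left ?_ _
      exact Finset.prod_dvd_prod_of_dvd _ _ fun i hi =>
        dvd_pow_self _ (Finsupp.mem_support_iff.mp hi)
    exact Ideal.mem_of_dvd _ h1 (Ideal.subset_span ⟨_, hsup g hg m hm, rfl⟩)
  · rw [Ideal.span_le]
    rintro _ ⟨s, hs, rfl⟩
    exact hs

lemma radical_of_split {p n : ℕ} (hp : p.Prime)
    (J : Ideal (MvPolynomial (Fin n) (ZMod p)))
    (hJ : ∀ x ∈ J, ∃ h ∈ J, ∀ k, coeff k h = coeff (p • k) x) : J.IsRadical := by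
  haveI := Fact.mk hp
  refine isRadical_of_pow_p hp J fun g hg => ?_
  obtain ⟨h, hh, hc⟩ := hJ _ hg
  convert hh using 1
  ext k
  rw [hc, ← expand_zmod, coeff_expand_smul _ hp.ne_zero]

/-- if `deg f ≤ n` and, for some weighting `λ`, the unique term of `f` of
maximal `λ`-weight is `c·x₁⋯xₙ` with `c ≠ 0`, and `I` is compatibly split by
`g ↦ Tr(f^{p−1}·g)`, then `init_λ(I)` is a squarefree monomial (Stanley–Reisner) ideal;
in particular `init_λ(I)` and `I` are radical. -/
theorem stmt_18 {p : ℕ} (hp : p.Prime) {n : ℕ} (hn : 1 ≤ n) (lam : Fin n → ℕ)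
    (f : MvPolynomial (Fin n) (ZMod p)) (hdeg : f.totalDegree ≤ n)
    (hmem : (Finsupp.equivFunOnFinite.symm fun _ : Fin n => 1) ∈ f.support)
    (huniq : ∀ m ∈ f.support, m ≠ (Finsupp.equivFunOnFinite.symm fun _ : Fin n => 1) →
      wtOf lam m < wtOf lam (Finsupp.equivFunOnFinite.symm fun _ : Fin n => 1))
    (I : Ideal (MvPolynomial (Fin n) (ZMod p)))
    (hI : ∀ g ∈ I, Tr p n (f ^ (p - 1) * g) ∈ I) :
    IsSqfreeMonomialIdeal (initIdeal lam I) ∧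
      (initIdeal lam I).IsRadical ∧ I.IsRadical := by
  haveI := Fact.mk hp
  have hs := init_split hp lam f hmem huniq I hI
  refine ⟨sqfree_of_split hp _ hs, radical_of_split hp _ hs, ?_⟩
  refine isRadical_of_pow_p hp I fun g hg => ?_
  have h1 := hI _ hg
  rw [Tr_pow_mul hp] at h1
  have h2 : Tr p n (f ^ (p - 1)) = 1 := by
    classical
    ext k
    have h3 := coeff_split hp lam f hmem huniq 1 0 (by
      intro m hm
      rw [coeff_one, if_neg]
      rintro rfl
      simp [wtOf] at hm) k (Nat.zero_le _)
    rw [mul_one] at h3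
    rw [h3, coeff_one, coeff_one]
    congr 1
    apply propext
    constructor
    · intro h
      ext i
      have := DFunLike.congr_fun h i
      simp only [Finsupp.smul_apply, smul_eq_mul, Finsupp.zero_apply] at this ⊢
      have hp0 := hp.ne_zero
      rcases Nat.mul_eq_zero.mp this.symm with h | h
      · exact absurd h hp0
      · exact h.symm
    · rintro rfl
      simp
  rwa [h2, one_mul] at h1
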